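/- Let H be a group, d : Fin n → ℕ with d i ≥ 1, and for each i : Fin n let u_i : H →* unitaryGroup (Fin (d i)) ℂ be an irreducible group homomorphism. If there exists a nonzero ψ : (∀ i, Fin (d i)) → ℂ with ∑_y (∏_i (u_i h) (x i) (y i)) · ψ(y) = ψ(x) for all h ∈ H and all x (i.e. the tensor product of the representations u_i contains a trivial subrepresentation), then R(d) ≥ 0. -/

import Mathlib

/-!
By Schur's lemma an invariant vector `ψ` has only scalar one-site marginals, so after normalization
it is locally maximally entangled. Flattened at a site `k`, such a `ψ` is a `d k`-dimensional
subspace of the tensor product of the remaining sites whose orthogonal projector `P` has scalar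
marginals. Then so does `1 - P`, and hence castling `d k ↦ ∏_{i ≠ k} d i - d k` preserves the
existence of such vectors, provided the new dimension is positive; it also preserves `R`, since it
changes no `gcd` over a subset other than `{k}`. Castling down while `2 d k > ∏_{i ≠ k} d i` ends
either with `d k = ∏_{i ≠ k} d i` for some `k`, or with `2 d k ≤ ∏_{i ≠ k} d i` for all `k`.
In both cases `R ≥ 0` is elementary once `N(k₁, …, kₙ)` is seen, by inclusion–exclusion, to count
the complex numbers that are a `k i`-th root of unity for some `i`.
-/

open scoped ComplexConjugate

noncomputable section

def rhoK {n : ℕ} (d : Fin n → ℕ) (ψ : (∀ i, Fin (d i)) → ℂ) (k : Fin n) :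
    Matrix (Fin (d k)) (Fin (d k)) ℂ :=
  Matrix.of fun j l =>
    ∑ x : ∀ i, Fin (d i), if x k = j then ψ x * conj (ψ (Function.update x k l)) else 0

def Normalized {n : ℕ} {d : Fin n → ℕ} (ψ : (∀ i, Fin (d i)) → ℂ) : Prop :=
  ∑ x, ‖ψ x‖ ^ 2 = 1

def IsLME {n : ℕ} (d : Fin n → ℕ) (ψ : (∀ i, Fin (d i)) → ℂ) : Prop :=
  Normalized ψ ∧ ∀ k, rhoK d ψ k = (1 / (d k : ℂ)) • 1

def LMEExists (n : ℕ) (d : Fin n → ℕ) : Prop := ∃ ψ, IsLME d ψ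

def Nfun {n : ℕ} (k : Fin n → ℕ) : ℤ :=
  ∑ S ∈ Finset.univ.powerset.filter (fun S : Finset (Fin n) => S.Nonempty),
    (-1 : ℤ) ^ (S.card + 1) * ((Finset.gcd S k : ℕ) : ℤ)

def Rfun {n : ℕ} (d : Fin n → ℕ) : ℤ :=
  (∏ i, (d i : ℤ)) - Nfun (fun i => (d i) ^ 2)

def Dfun {n : ℕ} (d : Fin n → ℕ) : ℤ :=
  (∏ i, (d i : ℤ)) - 1 - ∑ i, ((d i : ℤ) ^ 2 - 1)

/-- A unitary representation is irreducible if the only invariant subspaces are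
trivial. -/
def IsIrreducibleRep {m : ℕ} {H : Type*} [Group H]
    (u : H →* Matrix.unitaryGroup (Fin m) ℂ) : Prop :=
  ∀ W : Submodule ℂ (Fin m → ℂ),
    (∀ h : H, ∀ w ∈ W, Matrix.mulVec (u h : Matrix (Fin m) (Fin m) ℂ) w ∈ W) →
    W = ⊥ ∨ W = ⊤

section RootsOfUnity

open Polynomial

variable {n : ℕ}

theorem card_nthRootsFinset_one {m : ℕ} (hm : 0 < m) : (nthRootsFinset m (1 : ℂ)).card = m :=
  (Complex.isPrimitiveRoot_exp m hm.ne').card_nthRootsFinset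

theorem finset_gcd_pos_of_forall_pos {ι : Type*} {k : ι → ℕ} (hk : ∀ i, 0 < k i) {S : Finset ι}
    (hS : S.Nonempty) : 0 < S.gcd k :=
  have ⟨i, hi⟩ := hS
  Nat.pos_of_dvd_of_pos (Finset.gcd_dvd hi) (hk i)

theorem inf'_nthRootsFinset_one {ι R : Type*} [CommRing R] [IsDomain R] [DecidableEq R]
    {k : ι → ℕ} (hk : ∀ i, 0 < k i) {S : Finset ι} (hS : S.Nonempty) :
    S.inf' hS (fun i => nthRootsFinset (k i) (1 : R)) = nthRootsFinset (S.gcd k) 1 := by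
  ext z
  simp only [Finset.mem_inf', mem_nthRootsFinset (hk _),
    mem_nthRootsFinset (finset_gcd_pos_of_forall_pos hk hS),
    ← orderOf_dvd_iff_pow_eq_one, Finset.dvd_gcd_iff]

theorem Nfun_eq_card_biUnion_nthRootsFinset {k : Fin n → ℕ} (hk : ∀ i, 0 < k i) :
    Nfun k = ((Finset.univ.biUnion fun i => nthRootsFinset (k i) (1 : ℂ)).card : ℤ) := by
  rw [Finset.inclusion_exclusion_card_biUnion, Nfun, ← Finset.sum_coe_sort]
  refine Finset.sum_congr rfl fun S _ => ?_
  have hS := (Finset.mem_filter.1 S.2).2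
  rw [inf'_nthRootsFinset_one hk hS, card_nthRootsFinset_one (finset_gcd_pos_of_forall_pos hk hS)]

theorem Nfun_le_of_forall_exists_dvd {k : Fin n → ℕ} (hk : ∀ i, 0 < k i) {T : Finset (Fin n)}
    (hT : ∀ i, ∃ j ∈ T, k i ∣ k j) : Nfun k ≤ 1 + ∑ j ∈ T, ((k j : ℤ) - 1) := by
  have hsub : (Finset.univ.biUnion fun i => nthRootsFinset (k i) (1 : ℂ)) ⊆
      {1} ∪ T.biUnion fun j => (nthRootsFinset (k j) (1 : ℂ)).erase 1 := by
    intro z hz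
    obtain ⟨i, -, hzi⟩ := Finset.mem_biUnion.1 hz
    obtain ⟨j, hj, hij⟩ := hT i
    have hzj : z ∈ nthRootsFinset (k j) (1 : ℂ) := by
      rw [mem_nthRootsFinset (hk _), ← orderOf_dvd_iff_pow_eq_one] at hzi ⊢
      exact hzi.trans hij
    by_cases h1 : z = 1
    · simp [h1]
    · exact Finset.mem_union_right _ (Finset.mem_biUnion.2 ⟨j, hj, Finset.mem_erase.2 ⟨h1, hzj⟩⟩)
  have hcard : ∀ j, (((nthRootsFinset (k j) (1 : ℂ)).erase 1).card : ℤ) = k j - 1 := fun j => by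
    rw [Finset.cast_card_erase_of_mem (one_mem_nthRootsFinset (hk j)),
      card_nthRootsFinset_one (hk j)]
  rw [Nfun_eq_card_biUnion_nthRootsFinset hk, ← Finset.sum_congr rfl fun j _ => hcard j]
  exact_mod_cast (Finset.card_le_card hsub).trans <| (Finset.card_union_le _ _).trans <|
    add_le_add (Finset.card_singleton _).le Finset.card_biUnion_le

theorem Nfun_sq_le_of_forall_exists_dvd {d : Fin n → ℕ} (hd : ∀ i, 0 < d i) {T : Finset (Fin n)}
    (hT : ∀ i, ∃ j ∈ T, d i ∣ d j) :
    Nfun (fun i => d i ^ 2) ≤ 1 + ∑ j ∈ T, ((d j : ℤ) ^ 2 - 1) := by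
  have h := Nfun_le_of_forall_exists_dvd (fun i => pow_pos (hd i) 2)
    (fun i => (hT i).imp fun _ h => ⟨h.1, pow_dvd_pow_of_dvd h.2 2⟩)
  simpa only [Nat.cast_pow] using h

end RootsOfUnity

section Numerics

variable {n : ℕ} {d : Fin n → ℕ}

theorem sum_sq_sub_one_le_mul_prod_sub_one {ι : Type*} {s : Finset ι} {f : ι → ℤ} {a : ℤ}
    (hf : ∀ i ∈ s, 1 ≤ f i) (ha : ∀ i ∈ s, f i ≤ a) :
    ∑ i ∈ s, (f i ^ 2 - 1) ≤ (a + 1) * (∏ i ∈ s, f i - 1) := by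
  classical
  induction s using Finset.induction_on with
  | empty => simp
  | insert i s hi ih =>
    rw [Finset.forall_mem_insert] at hf ha
    have hq := Finset.one_le_prod hf.2
    rw [Finset.sum_insert hi, Finset.prod_insert hi]
    calc f i ^ 2 - 1 + ∑ j ∈ s, (f j ^ 2 - 1)
        ≤ (f i + 1) * (f i - 1) + (a + 1) * (∏ j ∈ s, f j - 1) := by linarith [ih hf.2 ha.2]
      _ ≤ (a + 1) * ((∏ j ∈ s, f j) * (f i - 1)) + (a + 1) * (∏ j ∈ s, f j - 1) := by
          have : f i - 1 ≤ (∏ j ∈ s, f j) * (f i - 1) := le_mul_of_one_le_left (by linarith) hq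
          gcongr ?_ + _
          exact mul_le_mul (by linarith) this (by linarith) (by linarith)
      _ = (a + 1) * (f i * ∏ j ∈ s, f j - 1) := by ring

theorem Rfun_nonneg_of_eq_prod_erase (hd : ∀ i, 0 < d i) {k : Fin n}
    (hk : d k = ∏ i ∈ Finset.univ.erase k, d i) : 0 ≤ Rfun d := by
  have hdvd : ∀ i, d i ∣ d k := fun i => by
    rcases eq_or_ne i k with rfl | hik
    · exact dvd_rfl
    · rw [hk]
      exact Finset.dvd_prod_of_mem d (Finset.mem_erase.2 ⟨hik, Finset.mem_univ i⟩)
  have hN : Nfun (fun i => d i ^ 2) ≤ (d k : ℤ) ^ 2 := by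
    simpa using Nfun_sq_le_of_forall_exists_dvd hd (T := {k}) fun i =>
      ⟨k, Finset.mem_singleton_self k, hdvd i⟩
  have hprod : ∏ i, (d i : ℤ) = (d k : ℤ) ^ 2 := by
    rw [← Finset.mul_prod_erase _ _ (Finset.mem_univ k), ← Nat.cast_prod, ← hk, sq]
  rw [Rfun, hprod]
  exact sub_nonneg.2 hN

theorem sq_add_mul_sub_one_le {a q : ℤ} (ha : 2 ≤ a) (hq : 1 ≤ q) :
    a ^ 2 + (a + 1) * (q - 1) ≤ a * (a * q) := by
  have : 0 ≤ (a ^ 2 - a - 1) * (q - 1) := mul_nonneg (by nlinarith) (by linarith)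
  linarith

theorem sq_add_sq_add_mul_sub_one_le {a c q : ℤ} (ha : 2 ≤ a) (hac : a < c)
    (hcq : 2 * c ≤ a * q) :
    c ^ 2 + (a ^ 2 - 1) + (a + 1) * (q - 1) ≤ c * (a * q) := by
  have hq : 3 ≤ q := by
    by_contra! hq
    nlinarith
  -- `c * (a * q - c)` is increasing for `2 * c ≤ a * q`, so the worst case is `c = a + 1`.
  have hmono : 0 ≤ (c - (a + 1)) * (a * q - c - (a + 1)) :=
    mul_nonneg (by linarith) (by linarith)
  have hworst : 0 ≤ (a + 1) * ((a - 1) * (q - 2) - 1) :=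
    mul_nonneg (by linarith) (by nlinarith)
  linarith

theorem Rfun_nonneg_of_two_mul_le_prod_erase (hd : ∀ i, 0 < d i)
    (h : ∀ k, 2 * d k ≤ ∏ i ∈ Finset.univ.erase k, d i) : 0 ≤ Rfun d := by
  rcases isEmpty_or_nonempty (Fin n) with hn | hn
  · simp [Rfun, Nfun, Finset.univ_eq_empty, Finset.filter_singleton]
  obtain ⟨k, hk⟩ := Finite.exists_max d
  obtain ⟨i₀, hi₀, hdi₀⟩ : ∃ i ∈ Finset.univ.erase k, d i ≠ 1 :=
    Finset.exists_ne_one_of_prod_ne_one (by have := h k; have := hd k; omega)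
  obtain ⟨j, hj, hjmax⟩ := Finset.exists_max_image (Finset.univ.erase k) d ⟨i₀, hi₀⟩
  set B := (Finset.univ.erase k).erase j
  have ha : 2 ≤ (d j : ℤ) := by have := hd i₀; have := hjmax i₀ hi₀; omega
  have hq : 1 ≤ ∏ i ∈ B, (d i : ℤ) := Finset.one_le_prod fun i _ => by exact_mod_cast hd i
  have hprod : ∏ i, (d i : ℤ) = d k * (d j * ∏ i ∈ B, (d i : ℤ)) := by
    rw [← Finset.mul_prod_erase _ _ (Finset.mem_univ k), ← Finset.mul_prod_erase _ _ hj]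
  have hsum : ∑ i ∈ B, ((d i : ℤ) ^ 2 - 1) ≤ (d j + 1) * (∏ i ∈ B, (d i : ℤ) - 1) :=
    sum_sq_sub_one_le_mul_prod_sub_one (fun i _ => by exact_mod_cast hd i)
      fun i hi => by exact_mod_cast hjmax i (Finset.mem_of_mem_erase hi)
  rw [Rfun, hprod, sub_nonneg]
  rcases (hk j).eq_or_lt with hjk | hjk
  · have hN := Nfun_sq_le_of_forall_exists_dvd hd (T := Finset.univ.erase k) fun i => by
      rcases eq_or_ne i k with rfl | hik
      · exact ⟨j, hj, hjk.symm.dvd⟩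
      · exact ⟨i, Finset.mem_erase.2 ⟨hik, Finset.mem_univ i⟩, dvd_rfl⟩
    rw [← Finset.add_sum_erase _ _ hj] at hN
    rw [← hjk]
    linarith [sq_add_mul_sub_one_le ha hq]
  · have hN := Nfun_sq_le_of_forall_exists_dvd hd (T := Finset.univ) fun i =>
      ⟨i, Finset.mem_univ i, dvd_rfl⟩
    rw [← Finset.add_sum_erase _ _ (Finset.mem_univ k), ← Finset.add_sum_erase _ _ hj] at hN
    have hck : 2 * (d k : ℤ) ≤ d j * ∏ i ∈ B, (d i : ℤ) := by
      rw [Finset.mul_prod_erase _ (fun i => (d i : ℤ)) hj]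
      exact_mod_cast h k
    linarith [sq_add_sq_add_mul_sub_one_le ha (Nat.cast_lt.2 hjk) hck]

end Numerics

section Castling

variable {n : ℕ} {d e : Fin n → ℕ} {k : Fin n}

theorem finset_gcd_pow {ι : Type*} (S : Finset ι) (d : ι → ℕ) {m : ℕ} (hm : m ≠ 0) :
    S.gcd (fun i => d i ^ m) = S.gcd d ^ m := by
  classical
  induction S using Finset.induction_on with
  | empty => simp [hm]
  | insert i s _ ih => rw [Finset.gcd_insert, Finset.gcd_insert, ih]; exact Nat.pow_gcd_pow

/-- The dimension vectors `d` and `e` are castling transforms of each other at `k`: they agree away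
from `k`, and the entries at `k` add up to the product of all other dimensions. -/
structure IsCastling (d e : Fin n → ℕ) (k : Fin n) : Prop where
  eq_of_ne : ∀ i ≠ k, e i = d i
  add_eq : d k + e k = ∏ i ∈ Finset.univ.erase k, d i

theorem isCastling_update (h : d k ≤ ∏ i ∈ Finset.univ.erase k, d i) :
    IsCastling d (Function.update d k (∏ i ∈ Finset.univ.erase k, d i - d k)) k where
  eq_of_ne _ hi := Function.update_of_ne hi _ _
  add_eq := by rw [Function.update_self, Nat.add_sub_cancel' h]

namespace IsCastling

theorem prod_erase_eq (h : IsCastling d e k) :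
    ∏ i ∈ Finset.univ.erase k, e i = ∏ i ∈ Finset.univ.erase k, d i :=
  Finset.prod_congr rfl fun i hi => h.eq_of_ne i (Finset.ne_of_mem_erase hi)

theorem symm (h : IsCastling d e k) : IsCastling e d k where
  eq_of_ne i hi := (h.eq_of_ne i hi).symm
  add_eq := by rw [h.prod_erase_eq, ← h.add_eq, add_comm]

theorem gcd_dvd_gcd (h : IsCastling d e k) {S : Finset (Fin n)} (hS : S.Nonempty) (hSk : S ≠ {k}) :
    S.gcd d ∣ S.gcd e := by
  refine Finset.dvd_gcd fun i hi => ?_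
  rcases eq_or_ne i k with rfl | hik
  · obtain ⟨j, hj, hji⟩ : ∃ j ∈ S, j ≠ i := by
      by_contra! hall
      exact hSk (Finset.eq_singleton_iff_nonempty_unique_mem.2 ⟨hS, hall⟩)
    refine (Nat.dvd_add_right (Finset.gcd_dvd hi)).1 ?_
    rw [h.add_eq]
    exact (Finset.gcd_dvd hj).trans
      (Finset.dvd_prod_of_mem d (Finset.mem_erase.2 ⟨hji, Finset.mem_univ j⟩))
  · rw [h.eq_of_ne i hik]
    exact Finset.gcd_dvd hi

theorem gcd_eq (h : IsCastling d e k) {S : Finset (Fin n)} (hS : S.Nonempty) (hSk : S ≠ {k}) :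
    S.gcd d = S.gcd e :=
  Nat.dvd_antisymm (h.gcd_dvd_gcd hS hSk) (h.symm.gcd_dvd_gcd hS hSk)

theorem Nfun_sq_sub_Nfun_sq (h : IsCastling d e k) :
    Nfun (fun i => d i ^ 2) - Nfun (fun i => e i ^ 2) = (d k : ℤ) ^ 2 - (e k : ℤ) ^ 2 := by
  rw [Nfun, Nfun, ← Finset.sum_sub_distrib, Finset.sum_eq_single_of_mem {k} (by simp)]
  · simp
  · intro S hS hSk
    rw [finset_gcd_pow S d two_ne_zero, finset_gcd_pow S e two_ne_zero,
      h.gcd_eq (Finset.mem_filter.1 hS).2 hSk, sub_self]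

theorem prod_eq (h : IsCastling d e k) : ∏ i, (d i : ℤ) = d k * (d k + e k) := by
  rw [← Finset.mul_prod_erase _ _ (Finset.mem_univ k)]
  exact_mod_cast congrArg (d k * ·) h.add_eq.symm

theorem Rfun_eq (h : IsCastling d e k) : Rfun d = Rfun e := by
  rw [Rfun, Rfun, h.prod_eq, h.symm.prod_eq]
  linarith [h.Nfun_sq_sub_Nfun_sq]

theorem sum_lt_sum (h : IsCastling d e k) (hk : e k < d k) : ∑ i, e i < ∑ i, d i := by
  refine Finset.sum_lt_sum (fun i _ => ?_) ⟨k, Finset.mem_univ k, hk⟩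
  rcases eq_or_ne i k with rfl | hik
  · exact hk.le
  · exact (h.eq_of_ne i hik).le

end IsCastling

end Castling

section Isometry

open Matrix

variable {𝕜 l m n : Type*} [RCLike 𝕜] [Fintype n] [DecidableEq m]

theorem orthonormal_col_iff {A : Matrix n m 𝕜} :
    Orthonormal 𝕜 (fun j => WithLp.toLp 2 (A.col j)) ↔ Aᴴ * A = 1 := by
  simp only [orthonormal_iff_ite, ← Matrix.ext_iff, mul_apply, conjTranspose_apply, one_apply,
    EuclideanSpace.inner_toLp_toLp, dotProduct, col_apply, Pi.star_apply, mul_comm]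

theorem card_le_card_of_conjTranspose_mul_self_eq_one [Fintype m] {A : Matrix n m 𝕜}
    (hA : Aᴴ * A = 1) : Fintype.card m ≤ Fintype.card n := by
  rw [← rank_one (R := 𝕜) (n := m), ← hA]
  exact (rank_mul_le_right _ _).trans (rank_le_card_height A)

theorem exists_complementary_isometry [Fintype l] [Fintype m] [DecidableEq l] [DecidableEq n]
    {A : Matrix n m 𝕜} (hA : Aᴴ * A = 1)
    (hcard : Fintype.card m + Fintype.card l = Fintype.card n) :
    ∃ W : Matrix n l 𝕜, Wᴴ * W = 1 ∧ A * Aᴴ + W * Wᴴ = 1 := by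
  let v : m ⊕ l → EuclideanSpace 𝕜 n := Sum.elim (fun j => WithLp.toLp 2 (A.col j)) 0
  have hv : Orthonormal 𝕜 ((Set.range Sum.inl).domRestrict v) := by
    convert! (orthonormal_col_iff.2 hA).comp _
      (Equiv.ofInjective _ Sum.inl_injective).symm.injective
    ext ⟨_, j, rfl⟩
    simp [v]
  obtain ⟨b, hb⟩ := hv.exists_orthonormalBasis_extension_of_card_eq (by simp [hcard])
  let U : Matrix n (m ⊕ l) 𝕜 := of fun i s => b s i
  have hU : Uᴴ * U = 1 := orthonormal_col_iff.1 b.orthonormal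
  have hUA : U = fromCols A U.toCols₂ := by
    ext i (j | j)
    · simp [U, hb (Sum.inl j) ⟨j, rfl⟩, v]
    · rfl
  have hU' : U * Uᴴ = 1 := (mul_eq_one_comm_of_card_eq _ _ _ (by simp [hcard])).1 hU
  rw [hUA, conjTranspose_fromCols_eq_fromRows_conjTranspose] at hU hU'
  rw [fromRows_mul_fromCols, ← fromBlocks_one, fromBlocks_inj] at hU
  rw [fromCols_mul_fromRows] at hU'
  exact ⟨U.toCols₂, hU.2.2.2, hU'⟩

end Isometry

section Tensor

open Matrix

variable {ι R : Type*} {β : ι → Type*}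

/-- The tensor (Kronecker) product `⨂ᵢ Aᵢ` of a family of square matrices, indexed by tuples. -/
def piKronecker [CommMonoid R] [Fintype ι] (A : ∀ i, Matrix (β i) (β i) R) :
    Matrix (∀ i, β i) (∀ i, β i) R :=
  of fun x y => ∏ i, A i (x i) (y i)

section PiKronecker

variable [CommSemiring R] [Fintype ι]

theorem piKronecker_mul [DecidableEq ι] [∀ i, Fintype (β i)] (A B : ∀ i, Matrix (β i) (β i) R) :
    piKronecker A * piKronecker B = piKronecker fun i => A i * B i := by
  ext x y
  simp only [piKronecker, mul_apply, of_apply, Fintype.prod_sum, ← Finset.prod_mul_distrib]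

theorem piKronecker_one [∀ i, DecidableEq (β i)] [DecidableEq (∀ i, β i)] :
    piKronecker (fun i => (1 : Matrix (β i) (β i) R)) = 1 := by
  ext x y
  simp only [piKronecker, of_apply, one_apply, Finset.prod_ite_zero, Finset.prod_const_one,
    Finset.mem_univ, true_imp_iff, funext_iff]

theorem piKronecker_conjTranspose [StarRing R] (A : ∀ i, Matrix (β i) (β i) R) :
    (piKronecker A)ᴴ = piKronecker fun i => (A i)ᴴ := by
  ext x y
  simp [piKronecker]

end PiKronecker

section Flatten

variable [DecidableEq ι]

theorem piSplitAt_symm_self (k : ι) (t : β k) (y : ∀ j : {j // j ≠ k}, β j) :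
    (Equiv.piSplitAt k β).symm (t, y) k = t := by
  simp

theorem update_piSplitAt_symm_self (k : ι) (t s : β k) (y : ∀ j : {j // j ≠ k}, β j) :
    Function.update ((Equiv.piSplitAt k β).symm (t, y)) k s =
      (Equiv.piSplitAt k β).symm (s, y) := by
  ext i
  rcases eq_or_ne i k with rfl | hik
  · simp
  · simp [hik]

theorem update_piSplitAt_symm_of_ne (k : ι) (j : {j // j ≠ k}) (t : β k) (b : β j)
    (y : ∀ j : {j // j ≠ k}, β j) :
    Function.update ((Equiv.piSplitAt k β).symm (t, y)) j b =
      (Equiv.piSplitAt k β).symm (t, Function.update y j b) := by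
  ext i
  rcases eq_or_ne i k with rfl | hik
  · simp [j.2.symm]
  · rcases eq_or_ne i j with rfl | hij
    · simp [hik]
    · rw [Function.update_of_ne hij]
      simp [hik, Function.update_of_ne (a := (⟨i, hik⟩ : {j // j ≠ k})) (a' := j)
        (fun h => hij (congrArg Subtype.val h))]

/-- The tensor `ψ ∈ ⨂ᵢ R^{βᵢ}` regarded as a matrix with columns indexed by the site `k` and rows
by the remaining sites. -/
def flatten (k : ι) (ψ : (∀ i, β i) → R) : Matrix (∀ j : {j // j ≠ k}, β j) (β k) R :=
  of fun y t => ψ ((Equiv.piSplitAt k β).symm (t, y))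

theorem flatten_surjective (k : ι) :
    Function.Surjective (flatten k : ((∀ i, β i) → R) → _) := fun A =>
  ⟨fun x => A (Equiv.piSplitAt k β x).2 (Equiv.piSplitAt k β x).1, by
    ext y t
    simp only [flatten, of_apply, Equiv.apply_symm_apply]⟩

theorem flatten_piKronecker_mulVec [CommSemiring R] [Fintype ι] [∀ i, Fintype (β i)] (k : ι)
    (A : ∀ i, Matrix (β i) (β i) R) (ψ : (∀ i, β i) → R) :
    flatten k (piKronecker A *ᵥ ψ) =
      piKronecker (fun j : {j // j ≠ k} => A j) * flatten k ψ * (A k)ᵀ := by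
  ext y t
  simp only [flatten, of_apply, mulVec, dotProduct, mul_apply, transpose_apply, Finset.sum_mul,
    piKronecker, ← (Equiv.piSplitAt k β).symm.sum_comp, Fintype.sum_prod_type,
    Fintype.prod_eq_mul_prod_subtype_ne _ k]
  refine Finset.sum_congr rfl fun s _ => Finset.sum_congr rfl fun z _ => ?_
  have hA : ∀ j : {j // j ≠ k}, A j ((Equiv.piSplitAt k β).symm (t, y) j)
      ((Equiv.piSplitAt k β).symm (s, z) j) = A j (y j) (z j) := fun j => by simp [j.2]
  simp only [hA, piSplitAt_symm_self]
  ring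

end Flatten

end Tensor

section Marginal

open Matrix

variable {κ R : Type*} {β : κ → Type*} [Fintype κ] [DecidableEq κ] [∀ i, Fintype (β i)]
  [∀ i, DecidableEq (β i)]

/-- The marginal (partial trace over all sites but `j`) of an operator `G` on `⨂ᵢ R^{βᵢ}`. -/
def marginal [AddCommMonoid R] (j : κ) (G : Matrix (∀ i, β i) (∀ i, β i) R) :
    Matrix (β j) (β j) R :=
  of fun a b => ∑ y, if y j = a then G y (Function.update y j b) else 0

theorem marginal_sub [AddCommGroup R] (j : κ) (G G' : Matrix (∀ i, β i) (∀ i, β i) R) :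
    marginal j (G - G') = marginal j G - marginal j G' := by
  ext a b
  simp only [marginal, of_apply, Matrix.sub_apply, ← Finset.sum_sub_distrib, ite_sub_ite, sub_zero]

theorem marginal_one [Semiring R] (j : κ) :
    marginal j (1 : Matrix (∀ i, β i) (∀ i, β i) R) =
      ((∏ i ∈ Finset.univ.erase j, Fintype.card (β i) : ℕ) : R) • 1 := by
  ext a b
  have hcard : (Finset.univ.filter fun y : ∀ i, β i => y j = a).card =
      ∏ i ∈ Finset.univ.erase j, Fintype.card (β i) := by
    simpa using Fintype.card_filter_piFinset_eq_of_mem (fun _ => Finset.univ) j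
      (Finset.mem_univ a)
  have hdiag : ∀ y : ∀ i, β i, y = Function.update y j b ↔ y j = b := fun y => by
    rw [eq_comm, Function.update_eq_self_iff, eq_comm]
  simp only [marginal, of_apply, Matrix.smul_apply, one_apply, hdiag, smul_eq_mul, mul_ite, mul_one,
    mul_zero, ← ite_and, ]
  rcases eq_or_ne a b with rfl | hab
  · simp only [and_self, if_true, Finset.sum_boole, hcard]
  · rw [if_neg hab]
    exact Finset.sum_eq_zero fun y _ => if_neg fun h => hab (h.1.symm.trans h.2)

end Marginal

section BalancedIsometry

open Matrix

variable {κ : Type*} [Fintype κ] [DecidableEq κ] {d : κ → ℕ} {m m' : ℕ}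

/-- There is an `m`-dimensional subspace of `⨂ⱼ ℂ^{dⱼ}`, given as the range of an isometry `A`,
whose orthogonal projector `A Aᴴ` has only scalar marginals. -/
def BalancedIsometryExists (m : ℕ) (d : κ → ℕ) : Prop :=
  ∃ A : Matrix (∀ j, Fin (d j)) (Fin m) ℂ,
    Aᴴ * A = 1 ∧ ∀ j, ∃ c : ℂ, marginal j (A * Aᴴ) = c • 1

namespace BalancedIsometryExists

theorem le_prod (h : BalancedIsometryExists m d) : m ≤ ∏ j, d j := by
  obtain ⟨A, hA, -⟩ := h
  simpa using card_le_card_of_conjTranspose_mul_self_eq_one hA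

theorem compl (h : BalancedIsometryExists m d) (hm : m + m' = ∏ j, d j) :
    BalancedIsometryExists m' d := by
  obtain ⟨A, hA, hscalar⟩ := h
  obtain ⟨W, hW, hAW⟩ := exists_complementary_isometry (l := Fin m') hA (by simpa using hm)
  refine ⟨W, hW, fun j => ?_⟩
  obtain ⟨c, hc⟩ := hscalar j
  rw [eq_sub_of_add_eq' hAW, marginal_sub, marginal_one, hc, ← sub_smul]
  exact ⟨_, rfl⟩

end BalancedIsometryExists

end BalancedIsometry

section ReducedDensity

open Matrix

variable {n : ℕ} {d : Fin n → ℕ}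

theorem rhoK_eq_transpose_conjTranspose_flatten_mul (ψ : (∀ i, Fin (d i)) → ℂ) (k : Fin n) :
    rhoK d ψ k = ((flatten k ψ)ᴴ * flatten k ψ)ᵀ := by
  ext a b
  simp only [rhoK, of_apply, transpose_apply, mul_apply, conjTranspose_apply, flatten,
    ← (Equiv.piSplitAt k fun i => Fin (d i)).symm.sum_comp, Fintype.sum_prod_type,
    piSplitAt_symm_self, update_piSplitAt_symm_self, Finset.sum_ite_irrel, Finset.sum_const_zero,
    Finset.sum_ite_eq', Finset.mem_univ, if_true, starRingEnd_apply, mul_comm]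

theorem rhoK_eq_marginal_flatten_mul_conjTranspose (ψ : (∀ i, Fin (d i)) → ℂ) {k : Fin n}
    (j : {j // j ≠ k}) : rhoK d ψ j = marginal j (flatten k ψ * (flatten k ψ)ᴴ) := by
  ext a b
  have hj : ∀ t (y : ∀ i : {i // i ≠ k}, Fin (d i)),
      (Equiv.piSplitAt k fun i => Fin (d i)).symm (t, y) j = y j := fun t y => by simp [j.2]
  simp only [rhoK, of_apply, marginal, mul_apply, conjTranspose_apply, flatten,
    ← (Equiv.piSplitAt k fun i => Fin (d i)).symm.sum_comp, Fintype.sum_prod_type_right,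
    hj, update_piSplitAt_symm_of_ne, Finset.sum_ite_irrel, Finset.sum_const_zero,
    starRingEnd_apply]

theorem rhoK_smul (s : ℂ) (ψ : (∀ i, Fin (d i)) → ℂ) (k : Fin n) :
    rhoK d (s • ψ) k = (s * conj s) • rhoK d ψ k := by
  ext a b
  simp only [rhoK, of_apply, Matrix.smul_apply, Pi.smul_apply, smul_eq_mul, map_mul, Finset.mul_sum,
    mul_ite, mul_zero, mul_mul_mul_comm]

theorem trace_rhoK (ψ : (∀ i, Fin (d i)) → ℂ) (k : Fin n) :
    (rhoK d ψ k).trace = ((∑ x, ‖ψ x‖ ^ 2 : ℝ) : ℂ) := by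
  simp only [trace, diag_apply, rhoK, of_apply]
  rw [Finset.sum_comm]
  simp [Complex.mul_conj']

theorem isLME_of_rhoK_scalar {ψ : (∀ i, Fin (d i)) → ℂ} (hψ : Normalized ψ)
    (hρ : ∀ k, ∃ c : ℂ, rhoK d ψ k = c • 1) : IsLME d ψ := by
  refine ⟨hψ, fun k => ?_⟩
  obtain ⟨c, hc⟩ := hρ k
  have htrace : c * d k = 1 := by
    have h := trace_rhoK ψ k
    rw [hc, show ∑ x, ‖ψ x‖ ^ 2 = 1 from hψ] at h
    simpa using h
  rw [hc, eq_one_div_of_mul_eq_one_left htrace]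

theorem exists_normalized_smul {ψ : (∀ i, Fin (d i)) → ℂ} (hψ : ψ ≠ 0) :
    ∃ s : ℂ, Normalized (s • ψ) := by
  have hpos : 0 < ∑ x, ‖ψ x‖ ^ 2 := by
    obtain ⟨x, hx⟩ := Function.ne_iff.1 hψ
    exact Finset.sum_pos' (fun _ _ => by positivity)
      ⟨x, Finset.mem_univ x, pow_pos (norm_pos_iff.2 hx) 2⟩
  refine ⟨((√(∑ x, ‖ψ x‖ ^ 2))⁻¹ : ℝ), ?_⟩
  simp only [Normalized, Pi.smul_apply, norm_smul, Complex.norm_real, mul_pow, ← Finset.mul_sum,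
    Real.norm_eq_abs, sq_abs, inv_pow, Real.sq_sqrt hpos.le, inv_mul_cancel₀ hpos.ne']

theorem lmeExists_of_rhoK_scalar {ψ : (∀ i, Fin (d i)) → ℂ} (hψ : ψ ≠ 0)
    (hρ : ∀ k, ∃ c : ℂ, rhoK d ψ k = c • 1) : LMEExists n d := by
  obtain ⟨s, hs⟩ := exists_normalized_smul hψ
  refine ⟨s • ψ, isLME_of_rhoK_scalar hs fun k => ?_⟩
  obtain ⟨c, hc⟩ := hρ k
  exact ⟨s * conj s * c, by rw [rhoK_smul, hc, smul_smul]⟩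

theorem LMEExists.pos (h : LMEExists n d) (i : Fin n) : 0 < d i := by
  obtain ⟨ψ, hψ, -⟩ := h
  obtain ⟨x, -, -⟩ := Finset.exists_ne_zero_of_sum_ne_zero (hψ.trans_ne one_ne_zero)
  exact (x i).pos

theorem LMEExists.balancedIsometryExists (h : LMEExists n d) (k : Fin n) :
    BalancedIsometryExists (d k) fun j : {j // j ≠ k} => d j := by
  have hk : (d k : ℂ) ≠ 0 := Nat.cast_ne_zero.2 (h.pos k).ne'
  obtain ⟨ψ, -, hρ⟩ := h
  have hs : ((√(d k) : ℝ) : ℂ) * conj ((√(d k) : ℝ) : ℂ) = d k := by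
    rw [Complex.conj_ofReal, ← Complex.ofReal_mul, Real.mul_self_sqrt (Nat.cast_nonneg _),
      Complex.ofReal_natCast]
  refine ⟨flatten k (((√(d k) : ℝ) : ℂ) • ψ), ?_, fun j => ?_⟩
  · rw [← transpose_inj, ← rhoK_eq_transpose_conjTranspose_flatten_mul, rhoK_smul, hs, hρ,
      smul_smul, mul_one_div_cancel hk, one_smul, transpose_one]
  · rw [← rhoK_eq_marginal_flatten_mul_conjTranspose, rhoK_smul, hρ, smul_smul]
    exact ⟨_, rfl⟩

theorem BalancedIsometryExists.lmeExists {k : Fin n} (hk : 0 < d k)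
    (h : BalancedIsometryExists (d k) fun j : {j // j ≠ k} => d j) : LMEExists n d := by
  obtain ⟨A, hA, hscalar⟩ := h
  obtain ⟨ψ, rfl⟩ := flatten_surjective (β := fun i => Fin (d i)) k A
  have : NeZero (d k) := ⟨hk.ne'⟩
  refine lmeExists_of_rhoK_scalar (ψ := ψ) ?_ fun i => ?_
  · rintro rfl
    have h0 : flatten k (0 : (∀ i, Fin (d i)) → ℂ) = 0 := rfl
    exact zero_ne_one (by rwa [h0, Matrix.mul_zero] at hA)
  · rcases eq_or_ne i k with rfl | hik
    · exact ⟨1, by rw [rhoK_eq_transpose_conjTranspose_flatten_mul, hA, transpose_one, one_smul]⟩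
    · obtain ⟨c, hc⟩ := hscalar ⟨i, hik⟩
      exact ⟨c, (rhoK_eq_marginal_flatten_mul_conjTranspose ψ ⟨i, hik⟩).trans hc⟩

theorem prod_subtype_ne_eq_prod_erase (k : Fin n) :
    ∏ j : {j // j ≠ k}, d j = ∏ i ∈ Finset.univ.erase k, d i :=
  (Finset.prod_subtype _ (by simp) d).symm

theorem LMEExists.le_prod_erase (h : LMEExists n d) (k : Fin n) :
    d k ≤ ∏ i ∈ Finset.univ.erase k, d i :=
  (h.balancedIsometryExists k).le_prod.trans_eq (prod_subtype_ne_eq_prod_erase k)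

theorem IsCastling.lmeExists {e : Fin n → ℕ} {k : Fin n} (h : IsCastling d e k)
    (hd : LMEExists n d) (hk : 0 < e k) : LMEExists n e := by
  have hrest : (fun j : {j // j ≠ k} => e j) = fun j : {j // j ≠ k} => d j :=
    funext fun j => h.eq_of_ne j j.2
  refine BalancedIsometryExists.lmeExists hk ?_
  rw [hrest]
  exact (hd.balancedIsometryExists k).compl
    (h.add_eq.trans (prod_subtype_ne_eq_prod_erase k).symm)

theorem LMEExists.Rfun_nonneg (h : LMEExists n d) : 0 ≤ Rfun d := by
  induction hN : ∑ i, d i using Nat.strong_induction_on generalizing d with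
  | _ N ih =>
    by_cases hbal : ∀ k, 2 * d k ≤ ∏ i ∈ Finset.univ.erase k, d i
    · exact Rfun_nonneg_of_two_mul_le_prod_erase h.pos hbal
    push Not at hbal
    obtain ⟨k, hk⟩ := hbal
    rcases (h.le_prod_erase k).eq_or_lt with heq | hlt
    · exact Rfun_nonneg_of_eq_prod_erase h.pos heq
    obtain ⟨e, he⟩ : ∃ e, IsCastling d e k := ⟨_, isCastling_update hlt.le⟩
    have hdek : d k + e k = ∏ i ∈ Finset.univ.erase k, d i := he.add_eq
    rw [he.Rfun_eq]
    exact ih _ (hN ▸ he.sum_lt_sum (by omega)) (he.lmeExists h (by omega)) rfl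

theorem rhoK_piKronecker_mulVec {k : Fin n} {A : ∀ i, Matrix (Fin (d i)) (Fin (d i)) ℂ}
    (hA : ∀ i ≠ k, (A i)ᴴ * A i = 1) (ψ : (∀ i, Fin (d i)) → ℂ) :
    rhoK d (piKronecker A *ᵥ ψ) k = A k * rhoK d ψ k * (A k)ᴴ := by
  set V := piKronecker fun j : {j // j ≠ k} => A j
  have hV : Vᴴ * V = 1 := by
    have hA' : ∀ j : {j // j ≠ k}, (A j)ᴴ * A j = 1 := fun j => hA j j.2
    simp only [V, piKronecker_conjTranspose, piKronecker_mul, hA', piKronecker_one]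
  simp only [rhoK_eq_transpose_conjTranspose_flatten_mul]
  rw [flatten_piKronecker_mulVec]
  calc ((V * flatten k ψ * (A k)ᵀ)ᴴ * (V * flatten k ψ * (A k)ᵀ))ᵀ
      = ((A k)ᵀᴴ * ((flatten k ψ)ᴴ * (Vᴴ * V) * flatten k ψ) * (A k)ᵀ)ᵀ := by
        simp only [conjTranspose_mul, Matrix.mul_assoc]
    _ = A k * ((flatten k ψ)ᴴ * flatten k ψ)ᵀ * (A k)ᴴ := by
        rw [hV, Matrix.mul_one, transpose_mul, transpose_mul _ (_ * _), transpose_transpose,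
          Matrix.mul_assoc]
        rfl

end ReducedDensity

section Irreducible

open Matrix

theorem IsIrreducibleRep.exists_eq_smul_one {m : ℕ} {H : Type*} [Group H]
    {u : H →* unitaryGroup (Fin m) ℂ} (hu : IsIrreducibleRep u) {ρ : Matrix (Fin m) (Fin m) ℂ}
    (hρ : ∀ h, (u h : Matrix (Fin m) (Fin m) ℂ) * ρ = ρ * u h) : ∃ c : ℂ, ρ = c • 1 := by
  rcases isEmpty_or_nonempty (Fin m) with hm | hm
  · exact ⟨0, Subsingleton.elim _ _⟩
  obtain ⟨c, hc⟩ := Module.End.exists_eigenvalue (toLin' ρ)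
  have htop : Module.End.eigenspace (toLin' ρ) c = ⊤ := by
    refine (hu _ fun h w hw => ?_).resolve_left hc
    rw [Module.End.mem_eigenspace_iff, toLin'_apply] at hw ⊢
    rw [mulVec_mulVec, ← hρ, ← mulVec_mulVec, hw, mulVec_smul]
  refine ⟨c, toLin'.injective (LinearMap.ext fun w => ?_)⟩
  rw [Module.End.mem_eigenspace_iff.1 (htop ▸ Submodule.mem_top : w ∈ _)]
  simp

theorem rhoK_scalar_of_forall_piKronecker_mulVec_eq {n : ℕ} {d : Fin n → ℕ} {H : Type*} [Group H]
    {u : ∀ i : Fin n, H →* unitaryGroup (Fin (d i)) ℂ} {k : Fin n} (hu : IsIrreducibleRep (u k))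
    {ψ : (∀ i, Fin (d i)) → ℂ}
    (hψ : ∀ h, piKronecker (fun i => (u i h : Matrix (Fin (d i)) (Fin (d i)) ℂ)) *ᵥ ψ = ψ) :
    ∃ c : ℂ, rhoK d ψ k = c • 1 := by
  refine hu.exists_eq_smul_one fun h => ?_
  have huni : ∀ i, (u i h : Matrix (Fin (d i)) (Fin (d i)) ℂ)ᴴ * u i h = 1 := fun i =>
    mem_unitaryGroup_iff'.1 (u i h).2
  conv_rhs => rw [← hψ h, rhoK_piKronecker_mulVec fun i _ => huni i, Matrix.mul_assoc, huni,
    Matrix.mul_one]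

end Irreducible

/-- if the tensor product of irreducible unitary representations
of dimensions d i contains a trivial subrepresentation, then R(d) ≥ 0. -/
theorem invariant_vector_R_nonneg (n : ℕ) (d : Fin n → ℕ) (hd : ∀ i, 1 ≤ d i)
    (H : Type*) [Group H]
    (u : ∀ i : Fin n, H →* Matrix.unitaryGroup (Fin (d i)) ℂ)
    (hirr : ∀ i, IsIrreducibleRep (u i))
    (hex : ∃ ψ : (∀ i, Fin (d i)) → ℂ, ψ ≠ 0 ∧
      ∀ h : H, ∀ x : ∀ i, Fin (d i),
        ∑ y : ∀ i, Fin (d i),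
          (∏ i, (u i h : Matrix (Fin (d i)) (Fin (d i)) ℂ) (x i) (y i)) * ψ y = ψ x) :
    0 ≤ Rfun d := by
  obtain ⟨ψ, hψ0, hψ⟩ := hex
  have hscalar : ∀ k, ∃ c : ℂ, rhoK d ψ k = c • 1 := fun k =>
    rhoK_scalar_of_forall_piKronecker_mulVec_eq (hirr k) fun h => funext (hψ h)
  exact (lmeExists_of_rhoK_scalar hψ0 hscalar).Rfun_nonneg
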